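/- The strong separation condition fails for {S_i}_{i=1}^m if and only if there exist infinite sequences of finite words (α_k)_{k≥0} and (β_k)_{k≥0} over {1,…,m} with 1 ≤ p_{α_k}, p_{β_k} ≤ 2T−1 for all k, with α₀ and β₀ single letters and α₀ ≠ β₀, such that the sequence (q_k, c_k)_{k≥1} with the recursive structure w.r.t. ({α_k},{β_k}) satisfies (q_k, c_k) ∈ Ξ for all k ≥ 1. -/

import Mathlib

open Polynomial Filter

noncomputable section

namespace PVOSC

variable {m : ℕ}

/-- `λ⁻¹` is a Pisot (P.V.) number: an algebraic integer `> 1` all of whose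
Galois conjugates other than itself have complex absolute value `< 1`. -/
def IsPisot (θ : ℝ) : Prop :=
  1 < θ ∧ IsIntegral ℤ θ ∧
    ∀ z : ℂ, aeval z (minpoly ℤ θ) = 0 → z ≠ (θ : ℂ) → ‖z‖ < 1

/-- `p_σ` for a finite word `σ`. -/
def wordP (p : Fin m → ℕ) (σ : List (Fin m)) : ℕ := (σ.map p).sum

/-- The contracting similitude `S_i(x) = λ^{p_i} x + b_i`. -/
def Smap (lam : ℝ) (p : Fin m → ℕ) (b : Fin m → ℝ) (i : Fin m) : ℝ → ℝ :=
  fun x => lam ^ p i * x + b i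

/-- `S_σ = S_{i₁} ∘ ⋯ ∘ S_{i_k}` for `σ = i₁ ⋯ i_k`. -/
def SW (lam : ℝ) (p : Fin m → ℕ) (b : Fin m → ℝ) (σ : List (Fin m)) : ℝ → ℝ :=
  σ.foldr (fun i f => Smap lam p b i ∘ f) id

/-- `b_σ`, the translation part of `S_σ`. -/
def wordB (lam : ℝ) (p : Fin m → ℕ) (b : Fin m → ℝ) (σ : List (Fin m)) : ℝ :=
  SW lam p b σ 0

/-- `B = {0, b₁, …, b_m}`. -/
def Bset (b : Fin m → ℝ) : Set ℝ := insert 0 (Set.range b)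

/-- `B − B`. -/
def BB (b : Fin m → ℝ) : Set ℝ := {x | ∃ u ∈ Bset b, ∃ v ∈ Bset b, x = u - v}

/-- `max_i |b_i|`. -/
def bmax (b : Fin m → ℝ) : ℝ := ⨆ i, |b i|

/-- The set `𝒞`. -/
def Cset (lam : ℝ) (b : Fin m → ℝ) (T : ℕ) : Set ℝ :=
  {x | |x| ≤ (1 + lam ^ (1 - (T : ℤ))) * bmax b / (1 - lam) ∧
    ∃ R : ℝ[X], (∀ n, R.coeff n ∈ BB b) ∧ lam ^ (2 - (T : ℤ)) * x = R.eval lam⁻¹}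

/-- The vertex set `Ξ = {n ∈ ℤ : |n| ≤ T−1} × 𝒞`. -/
def Xi (lam : ℝ) (b : Fin m → ℝ) (T : ℕ) : Set (ℤ × ℝ) :=
  {v | |v.1| ≤ (T : ℤ) - 1 ∧ v.2 ∈ Cset lam b T}

/-- The open set condition. -/
def OSC (lam : ℝ) (p : Fin m → ℕ) (b : Fin m → ℝ) : Prop :=
  ∃ U : Set ℝ, U.Nonempty ∧ IsOpen U ∧ (⋃ i, Smap lam p b i '' U) ⊆ U ∧
    ∀ i j : Fin m, i ≠ j → Smap lam p b i '' U ∩ Smap lam p b j '' U = ∅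

/-- The strong separation condition for the attractor `E`. -/
def SSC (lam : ℝ) (p : Fin m → ℕ) (b : Fin m → ℝ) (E : Set ℝ) : Prop :=
  ∀ i j : Fin m, i ≠ j → Smap lam p b i '' E ∩ Smap lam p b j '' E = ∅

/-- Group law on `ℤ × ℝ`: `(p₁,c₁)·(p₂,c₂) = (p₁+p₂, λ^{p₁} c₂ + c₁)`. -/
def gmul (lam : ℝ) (u v : ℤ × ℝ) : ℤ × ℝ := (u.1 + v.1, lam ^ u.1 * v.2 + u.2)

/-- Inverse for the group law: `(p,c)⁻¹ = (−p, −λ^{−p} c)`. -/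
def ginv (lam : ℝ) (u : ℤ × ℝ) : ℤ × ℝ := (-u.1, -(lam ^ (-u.1) * u.2))

/-- The group element `(p_σ, b_σ)` associated to a finite word `σ`. -/
def elem (lam : ℝ) (p : Fin m → ℕ) (b : Fin m → ℝ) (σ : List (Fin m)) : ℤ × ℝ :=
  ((wordP p σ : ℤ), wordB lam p b σ)

/-- The sequence `(q_k, c_k)` with the recursive structure w.r.t. `({α_k}, {β_k})`:
`recSeq … k = (q_{k+1}, c_{k+1})`, i.e. index `k` corresponds to `(q_{k+1}, c_{k+1})`. -/
def recSeq (lam : ℝ) (p : Fin m → ℕ) (b : Fin m → ℝ) (α β : ℕ → List (Fin m)) : ℕ → ℤ × ℝ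
  | 0 => gmul lam (ginv lam (elem lam p b (β 0))) (elem lam p b (α 0))
  | (k+1) => gmul lam (ginv lam (elem lam p b (β (k+1))))
      (gmul lam (recSeq lam p b α β k) (elem lam p b (α (k+1))))

/-- The edge relation of the directed graph `G` on `Ξ`. -/
def edge (lam : ℝ) (p : Fin m → ℕ) (b : Fin m → ℝ) (T : ℕ) (u v : ℤ × ℝ) : Prop :=
  u ∈ Xi lam b T ∧ v ∈ Xi lam b T ∧
    ∃ α β : List (Fin m), 1 ≤ wordP p α ∧ wordP p α ≤ 2 * T - 1 ∧
      1 ≤ wordP p β ∧ wordP p β ≤ 2 * T - 1 ∧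
      v.1 = (wordP p α : ℤ) + u.1 - (wordP p β : ℤ) ∧
      v.2 = lam ^ (-(wordP p β : ℤ)) * u.2 + lam ^ (u.1 - (wordP p β : ℤ)) * wordB lam p b α
        - lam ^ (-(wordP p β : ℤ)) * wordB lam p b β

/-- `Λ = Ξ ∩ {(p_j − p_i, λ^{−p_i}(b_j − b_i)) : i ≠ j}`. -/
def Lam (lam : ℝ) (p : Fin m → ℕ) (b : Fin m → ℝ) (T : ℕ) : Set (ℤ × ℝ) :=
  Xi lam b T ∩ {v | ∃ i j : Fin m, i ≠ j ∧
    v = ((p j : ℤ) - (p i : ℤ), lam ^ (-(p i : ℤ)) * (b j - b i))}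

/-- The length-`k` prefix of an infinite word `ω`. -/
def prefixList (ω : ℕ → Fin m) (k : ℕ) : List (Fin m) := (List.range k).map ω

theorem SW_cons (lam : ℝ) (p : Fin m → ℕ) (b : Fin m → ℝ) (i : Fin m) (σ : List (Fin m)) (x : ℝ) :
    SW lam p b (i :: σ) x = lam ^ p i * SW lam p b σ x + b i := rfl

theorem SW_append (lam : ℝ) (p : Fin m → ℕ) (b : Fin m → ℝ) (σ τ : List (Fin m)) (x : ℝ) :
    SW lam p b (σ ++ τ) x = SW lam p b σ (SW lam p b τ x) := by
  induction σ with
  | nil => rfl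
  | cons i σ ih => rw [List.cons_append, SW_cons, SW_cons, ih]

theorem wordP_cons (p : Fin m → ℕ) (i : Fin m) (σ : List (Fin m)) :
    wordP p (i :: σ) = p i + wordP p σ := by simp [wordP]

theorem wordP_nil (p : Fin m → ℕ) : wordP p ([] : List (Fin m)) = 0 := by simp [wordP]

theorem wordP_append (p : Fin m → ℕ) (σ τ : List (Fin m)) :
    wordP p (σ ++ τ) = wordP p σ + wordP p τ := by simp [wordP]

theorem wordB_cons (lam : ℝ) (p : Fin m → ℕ) (b : Fin m → ℝ) (i : Fin m) (σ : List (Fin m)) :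
    wordB lam p b (i :: σ) = lam ^ p i * wordB lam p b σ + b i := rfl

theorem wordB_nil (lam : ℝ) (p : Fin m → ℕ) (b : Fin m → ℝ) :
    wordB lam p b ([] : List (Fin m)) = 0 := rfl

theorem SW_eq (lam : ℝ) (p : Fin m → ℕ) (b : Fin m → ℝ) (σ : List (Fin m)) (x : ℝ) :
    SW lam p b σ x = lam ^ wordP p σ * x + wordB lam p b σ := by
  induction σ with
  | nil => simp [wordP, wordB, SW]
  | cons i σ ih => rw [SW_cons, wordP_cons, wordB_cons, ih, pow_add]; ring

theorem wordB_append (lam : ℝ) (p : Fin m → ℕ) (b : Fin m → ℝ) (σ τ : List (Fin m)) :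
    wordB lam p b (σ ++ τ) = lam ^ wordP p σ * wordB lam p b τ + wordB lam p b σ := by
  unfold wordB
  rw [SW_append, SW_eq]; rfl

/-- concatenation of the first blocks -/
def cat (α : ℕ → List (Fin m)) : ℕ → List (Fin m)
  | 0 => α 0
  | (k+1) => cat α k ++ α (k+1)

theorem recSeq_eq (lam : ℝ) (h0 : 0 < lam) (p : Fin m → ℕ) (b : Fin m → ℝ)
    (α β : ℕ → List (Fin m)) (k : ℕ) :
    recSeq lam p b α β k = ((wordP p (cat α k) : ℤ) - wordP p (cat β k),
      lam ^ (-(wordP p (cat β k) : ℤ)) *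
        (wordB lam p b (cat α k) - wordB lam p b (cat β k))) := by
  have hne : lam ≠ 0 := h0.ne'
  induction k with
  | zero =>
    simp only [recSeq, gmul, ginv, elem, cat, Prod.mk.injEq]
    constructor <;> ring
  | succ k ih =>
    rw [recSeq, ih]
    simp only [gmul, ginv, elem, cat, Prod.mk.injEq, wordP_append, wordB_append]
    constructor
    · push_cast; ring
    · push_cast
      simp only [neg_add, sub_eq_add_neg, zpow_add₀ hne, zpow_neg, zpow_natCast]
      field_simp
      ring

theorem poly_word (lam : ℝ) (h0 : 0 < lam) (p : Fin m → ℕ) (hp : ∀ i, 1 ≤ p i) (b : Fin m → ℝ)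
    (σ : List (Fin m)) : ∀ N : ℕ, wordP p σ ≤ N + 1 →
    ∃ P : ℝ[X], (∀ n, P.coeff n ∈ Bset b) ∧ (∀ n, N < n → P.coeff n = 0) ∧
      lam⁻¹ ^ N * wordB lam p b σ = P.eval lam⁻¹ := by
  have hne : lam ≠ 0 := h0.ne'
  have hz : (0 : ℝ) ∈ Bset b := Set.mem_insert _ _
  have hb : ∀ i, b i ∈ Bset b := fun i => Set.mem_insert_of_mem _ ⟨i, rfl⟩
  induction σ with
  | nil => intro N _; exact ⟨0, by simpa using hz, by simp, by simp [wordB_nil]⟩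
  | cons i σ ih =>
    intro N hN
    rw [wordP_cons] at hN
    by_cases hi : p i ≤ N
    · obtain ⟨P, hP1, hP2, hP3⟩ := ih (N - p i) (by omega)
      have h1 := hp i
      refine ⟨P + monomial N (b i), ?_, ?_, ?_⟩
      · intro n
        rw [coeff_add, coeff_monomial]
        split_ifs with h
        · rw [hP2 n (by omega), zero_add]; exact hb i
        · rw [add_zero]; exact hP1 n
      · intro n hn
        rw [coeff_add, coeff_monomial, if_neg (by omega), hP2 n (by omega), add_zero]
      · rw [eval_add, eval_monomial, ← hP3, wordB_cons]
        have : lam⁻¹ ^ N * lam ^ p i = lam⁻¹ ^ (N - p i) := by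
          obtain ⟨d, rfl⟩ := Nat.exists_eq_add_of_le hi
          rw [Nat.add_sub_cancel_left, pow_add, inv_pow, inv_pow]
          field_simp
        rw [← this]; ring
    · have hs : σ = [] := by
        cases σ with
        | nil => rfl
        | cons j τ => rw [wordP_cons] at hN; have := hp j; omega
      subst hs
      refine ⟨monomial N (b i), ?_, ?_, ?_⟩
      · intro n
        rw [coeff_monomial]
        split_ifs with h
        · exact hb i
        · exact hz
      · intro n hn
        rw [coeff_monomial, if_neg (by omega)]
      · rw [eval_monomial, wordB_cons, wordB_nil]; ring

theorem E_bound (lam : ℝ) (h0 : 0 < lam) (h1 : lam < 1) (p : Fin m → ℕ) (hp : ∀ i, 1 ≤ p i)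
    (b : Fin m → ℝ) (E : Set ℝ) (hEc : IsCompact E) (hEne : E.Nonempty)
    (hEfix : E = ⋃ i, Smap lam p b i '' E) : ∀ x ∈ E, |x| ≤ bmax b / (1 - lam) := by
  obtain ⟨y, hy, hmax⟩ := hEc.exists_isMaxOn hEne (continuous_abs.continuousOn)
  have hmax' : ∀ x ∈ E, |x| ≤ |y| := fun x hx => hmax hx
  intro x hx
  refine (hmax' x hx).trans ?_
  have hy' := hy
  rw [hEfix] at hy'
  obtain ⟨i, z, hz, rfl⟩ := Set.mem_iUnion.1 hy'
  have hbi : |b i| ≤ bmax b := le_ciSup (f := fun i => |b i|) (Set.finite_range _).bddAbove i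
  have h2 := hmax' z hz
  have h3 : lam ^ p i ≤ lam := by
    simpa using pow_le_pow_of_le_one h0.le h1.le (hp i)
  have h4 : |Smap lam p b i z| ≤ lam ^ p i * |z| + |b i| := by
    unfold Smap
    refine (abs_add_le _ _).trans ?_
    rw [abs_mul, abs_of_pos (pow_pos h0 _)]
  have h5 : lam ^ p i * |z| ≤ lam * |Smap lam p b i z| :=
    mul_le_mul h3 h2 (abs_nonneg _) h0.le
  rw [le_div_iff₀ (by linarith)]
  linarith

/-- state used in the construction of the blocks -/
def Good (lam : ℝ) (p : Fin m → ℕ) (b : Fin m → ℝ) (T : ℕ) (E : Set ℝ)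
    (A B : List (Fin m)) : Prop :=
  1 ≤ wordP p A ∧ 1 ≤ wordP p B ∧ wordP p A ≤ wordP p B + (T - 1) ∧
    wordP p B ≤ wordP p A + (T - 1) ∧
    ∃ y ∈ E, ∃ z ∈ E, SW lam p b A y = SW lam p b B z

theorem Good.symm {lam : ℝ} {p : Fin m → ℕ} {b : Fin m → ℝ} {T : ℕ} {E : Set ℝ}
    {A B : List (Fin m)} (h : Good lam p b T E A B) : Good lam p b T E B A := by
  obtain ⟨h1, h2, h3, h4, y, hy, z, hz, e⟩ := h
  exact ⟨h2, h1, h4, h3, z, hz, y, hy, e.symm⟩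

theorem extend (lam : ℝ) (p : Fin m → ℕ) (hp : ∀ i, 1 ≤ p i) (b : Fin m → ℝ) (T : ℕ)
    (hT : ∀ i, p i ≤ T) (E : Set ℝ) (hE : ∀ z ∈ E, ∃ i, ∃ w ∈ E, z = Smap lam p b i w) :
    ∀ n : ℕ, 1 ≤ n → ∀ z ∈ E, ∃ β : List (Fin m), ∃ w ∈ E, z = SW lam p b β w ∧
      1 ≤ wordP p β ∧ wordP p β ≤ max n T ∧ n ≤ wordP p β + (T - 1) ∧
      wordP p β ≤ n + (T - 1) := by
  intro n
  induction n using Nat.strong_induction_on with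
  | _ n ih =>
    intro hn z hz
    obtain ⟨i, w, hw, e⟩ := hE z hz
    have h1 := hp i
    have h2 := hT i
    by_cases h : n ≤ p i + (T - 1)
    · refine ⟨[i], w, hw, e, ?_, ?_, ?_, ?_⟩ <;> rw [wordP_cons, wordP_nil] <;> omega
    · obtain ⟨β, w', hw', e', k1, k2, k3, k4⟩ := ih (n - p i) (by omega) (by omega) w hw
      refine ⟨i :: β, w', hw', ?_, ?_, ?_, ?_, ?_⟩
      · rw [e, e', SW_cons]; rfl
      all_goals rw [wordP_cons]; omega

theorem step_aux (lam : ℝ) (p : Fin m → ℕ) (hp : ∀ i, 1 ≤ p i) (b : Fin m → ℝ) (T : ℕ)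
    (hT : ∀ i, p i ≤ T) (E : Set ℝ) (hE : ∀ z ∈ E, ∃ i, ∃ w ∈ E, z = Smap lam p b i w)
    (A B : List (Fin m)) (h : Good lam p b T E A B) (hAB : wordP p B ≤ wordP p A) :
    ∃ α β : List (Fin m), (1 ≤ wordP p α ∧ wordP p α ≤ 2 * T - 1 ∧
      1 ≤ wordP p β ∧ wordP p β ≤ 2 * T - 1) ∧ Good lam p b T E (A ++ α) (B ++ β) := by
  obtain ⟨h1, h2, h3, h4, y, hy, z, hz, e⟩ := h
  obtain ⟨i, y', hy', ey⟩ := hE y hy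
  have k1 := hp i
  have k2 := hT i
  obtain ⟨β, z', hz', ez, g1, g2, g3, g4⟩ :=
    extend lam p hp b T hT E hE (wordP p A - wordP p B + p i) (by omega) z hz
  have hi : wordP p [i] = p i := by rw [wordP_cons, wordP_nil]; rfl
  refine ⟨[i], β, ⟨by omega, by omega, by omega, by omega⟩, ?_, ?_, ?_, ?_,
    y', hy', z', hz', ?_⟩
  · rw [wordP_append]; omega
  · rw [wordP_append]; omega
  · rw [wordP_append, wordP_append]; omega
  · rw [wordP_append, wordP_append]; omega
  · rw [SW_append, SW_append, ← ez, ← e, ey]; rfl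

theorem step (lam : ℝ) (p : Fin m → ℕ) (hp : ∀ i, 1 ≤ p i) (b : Fin m → ℝ) (T : ℕ)
    (hT : ∀ i, p i ≤ T) (E : Set ℝ) (hE : ∀ z ∈ E, ∃ i, ∃ w ∈ E, z = Smap lam p b i w)
    (A B : List (Fin m)) (h : Good lam p b T E A B) :
    ∃ α β : List (Fin m), (1 ≤ wordP p α ∧ wordP p α ≤ 2 * T - 1 ∧
      1 ≤ wordP p β ∧ wordP p β ≤ 2 * T - 1) ∧ Good lam p b T E (A ++ α) (B ++ β) := by
  rcases le_total (wordP p B) (wordP p A) with hAB | hAB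
  · exact step_aux lam p hp b T hT E hE A B h hAB
  · obtain ⟨α, β, ⟨h1, h2, h3, h4⟩, g⟩ := step_aux lam p hp b T hT E hE B A h.symm hAB
    exact ⟨β, α, ⟨h3, h4, h1, h2⟩, g.symm⟩

theorem good_Xi (lam : ℝ) (h0 : 0 < lam) (h1 : lam < 1) (p : Fin m → ℕ) (hp : ∀ i, 1 ≤ p i)
    (b : Fin m → ℝ) (T : ℕ) (hT1 : 1 ≤ T) (E : Set ℝ)
    (hE : ∀ x ∈ E, |x| ≤ bmax b / (1 - lam))
    (A B : List (Fin m)) (h : Good lam p b T E A B) :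
    ((wordP p A : ℤ) - wordP p B,
      lam ^ (-(wordP p B : ℤ)) * (wordB lam p b A - wordB lam p b B)) ∈ Xi lam b T := by
  have hne : lam ≠ 0 := h0.ne'
  obtain ⟨hA, hB, h3, h4, y, hy, z, hz, e⟩ := h
  have hq : |(wordP p A : ℤ) - wordP p B| ≤ (T : ℤ) - 1 := by rw [abs_le]; omega
  refine ⟨hq, ?_, ?_⟩
  · rw [SW_eq, SW_eq] at e
    have hc : lam ^ (-(wordP p B : ℤ)) * (wordB lam p b A - wordB lam p b B)
        = z - lam ^ ((wordP p A : ℤ) - wordP p B) * y := by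
      have : wordB lam p b A - wordB lam p b B
        = lam ^ wordP p B * z - lam ^ wordP p A * y := by linarith
      rw [this, sub_eq_add_neg (wordP p A : ℤ), zpow_add₀ hne, zpow_neg, zpow_natCast,
        zpow_natCast]
      field_simp
    show |lam ^ (-(wordP p B : ℤ)) * (wordB lam p b A - wordB lam p b B)| ≤ _
    rw [hc]
    have hl : lam ^ ((wordP p A : ℤ) - wordP p B) ≤ lam ^ (1 - (T : ℤ)) := by
      apply zpow_le_zpow_right_of_le_one₀ h0 h1.le
      have := (abs_le.1 hq).1
      linarith
    have hlp : 0 < lam ^ ((wordP p A : ℤ) - wordP p B) := zpow_pos h0 _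
    have hlt : 0 < lam ^ (1 - (T : ℤ)) := zpow_pos h0 _
    calc |z - lam ^ ((wordP p A : ℤ) - wordP p B) * y|
        ≤ |z| + |lam ^ ((wordP p A : ℤ) - wordP p B) * y| := abs_sub _ _
      _ = |z| + lam ^ ((wordP p A : ℤ) - wordP p B) * |y| := by
          rw [abs_mul, abs_of_pos hlp]
      _ ≤ bmax b / (1 - lam) + lam ^ (1 - (T : ℤ)) * (bmax b / (1 - lam)) :=
          add_le_add (hE z hz) (mul_le_mul hl (hE y hy) (abs_nonneg _) hlt.le)
      _ = _ := by ring
  · obtain ⟨N, hN⟩ : ∃ N : ℕ, N + 2 = T + wordP p B := ⟨T + wordP p B - 2, by omega⟩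
    obtain ⟨P, hP1, -, hP3⟩ := poly_word lam h0 p hp b A N (by omega)
    obtain ⟨Q, hQ1, -, hQ3⟩ := poly_word lam h0 p hp b B N (by omega)
    refine ⟨P - Q, fun n => ⟨_, hP1 n, _, hQ1 n, coeff_sub _ _ _⟩, ?_⟩
    rw [eval_sub, ← hP3, ← hQ3]
    show lam ^ (2 - (T : ℤ)) * (lam ^ (-(wordP p B : ℤ)) * _) = _
    rw [← mul_assoc, ← zpow_add₀ hne]
    have : 2 - (T : ℤ) + -(wordP p B : ℤ) = -(N : ℤ) := by omega
    rw [this, zpow_neg, zpow_natCast, inv_pow]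
    ring

theorem SW_mem (lam : ℝ) (p : Fin m → ℕ) (b : Fin m → ℝ) (E : Set ℝ)
    (hE : ∀ i, ∀ w ∈ E, Smap lam p b i w ∈ E) (σ : List (Fin m)) (x : ℝ) (hx : x ∈ E) :
    SW lam p b σ x ∈ E := by
  induction σ with
  | nil => exact hx
  | cons i σ ih => exact hE i _ ih

theorem cat_cons (α : ℕ → List (Fin m)) (i : Fin m) (h : α 0 = [i]) (k : ℕ) :
    ∃ τ, cat α k = i :: τ := by
  induction k with
  | zero => exact ⟨[], h⟩
  | succ k ih => obtain ⟨τ, e⟩ := ih; exact ⟨τ ++ α (k+1), by rw [cat, e]; rfl⟩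

theorem cat_wordP (p : Fin m → ℕ) (α : ℕ → List (Fin m)) (h : ∀ k, 1 ≤ wordP p (α k)) (k : ℕ) :
    k ≤ wordP p (cat α k) := by
  induction k with
  | zero => exact Nat.zero_le _
  | succ k ih => have := h (k+1); rw [cat, wordP_append]; omega

theorem Smap_cont (lam : ℝ) (p : Fin m → ℕ) (b : Fin m → ℝ) (i : Fin m) :
    Continuous (Smap lam p b i) := by
  unfold Smap; fun_prop

theorem stmt9 (lam : ℝ) (hlam0 : 0 < lam) (hlam1 : lam < 1)
    (hPisot : IsPisot lam⁻¹)
    {m : ℕ} (hm : 2 ≤ m) (p : Fin m → ℕ) (hp : ∀ i, 1 ≤ p i)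
    (b : Fin m → ℝ) (hbZ : ∀ i, ∃ z : ℤ, b i = (z : ℝ))
    (T : ℕ) (hT : T = Finset.univ.sup p)
    (E : Set ℝ) (hEc : IsCompact E) (hEne : E.Nonempty)
    (hEfix : E = ⋃ i, Smap lam p b i '' E) :
    ¬ SSC lam p b E ↔
      ∃ α β : ℕ → List (Fin m),
        (∀ k : ℕ, 1 ≤ wordP p (α k) ∧ wordP p (α k) ≤ 2 * T - 1 ∧
          1 ≤ wordP p (β k) ∧ wordP p (β k) ≤ 2 * T - 1) ∧
        (α 0).length = 1 ∧ (β 0).length = 1 ∧ α 0 ≠ β 0 ∧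
        ∀ k : ℕ, recSeq lam p b α β k ∈ Xi lam b T := by
  have hpT : ∀ i, p i ≤ T := fun i => hT ▸ Finset.le_sup (Finset.mem_univ i)
  have hT1 : 1 ≤ T := (hp ⟨0, by omega⟩).trans (hpT _)
  have hE1 : ∀ z ∈ E, ∃ i, ∃ w ∈ E, z = Smap lam p b i w := by
    intro z hz
    rw [hEfix] at hz
    obtain ⟨i, w, hw, e⟩ := Set.mem_iUnion.1 hz
    exact ⟨i, w, hw, e.symm⟩
  have hE2 : ∀ i, ∀ w ∈ E, Smap lam p b i w ∈ E := by
    intro i w hw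
    rw [hEfix]
    exact Set.mem_iUnion.2 ⟨i, w, hw, rfl⟩
  have hEb := E_bound lam hlam0 hlam1 p hp b E hEc hEne hEfix
  constructor
  · intro hS
    unfold SSC at hS
    push Not at hS
    obtain ⟨i, j, hij, x, ⟨y, hy, ey⟩, ⟨z, hz, ez⟩⟩ := hS
    have hg0 : Good lam p b T E [i] [j] := by
      have a1 := hp i
      have a2 := hp j
      have a3 := hpT i
      have a4 := hpT j
      refine ⟨?_, ?_, ?_, ?_, y, hy, z, hz, ey.trans ez.symm⟩ <;>
        simp only [wordP_cons, wordP_nil] <;> omega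
    have hstep : ∀ s : List (Fin m) × List (Fin m), ∃ t : List (Fin m) × List (Fin m),
        Good lam p b T E s.1 s.2 → (1 ≤ wordP p t.1 ∧ wordP p t.1 ≤ 2 * T - 1 ∧
          1 ≤ wordP p t.2 ∧ wordP p t.2 ≤ 2 * T - 1) ∧
          Good lam p b T E (s.1 ++ t.1) (s.2 ++ t.2) := by
      intro s
      by_cases h : Good lam p b T E s.1 s.2
      · obtain ⟨α, β, h1, h2⟩ := step lam p hp b T hpT E hE1 s.1 s.2 h
        exact ⟨(α, β), fun _ => ⟨h1, h2⟩⟩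
      · exact ⟨([], []), fun h' => absurd h' h⟩
    choose f hf using hstep
    let st : ℕ → List (Fin m) × List (Fin m) := fun k =>
      Nat.rec ([i], [j]) (fun _ s => (s.1 ++ (f s).1, s.2 ++ (f s).2)) k
    have hst : ∀ k, Good lam p b T E (st k).1 (st k).2 := by
      intro k
      induction k with
      | zero => exact hg0
      | succ k ih => exact (hf _ ih).2
    let α : ℕ → List (Fin m) := fun k => Nat.casesOn k [i] (fun k => (f (st k)).1)
    let β : ℕ → List (Fin m) := fun k => Nat.casesOn k [j] (fun k => (f (st k)).2)
    have hα : ∀ k, cat α k = (st k).1 := by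
      intro k
      induction k with
      | zero => rfl
      | succ k ih => rw [cat, ih]
    have hβ : ∀ k, cat β k = (st k).2 := by
      intro k
      induction k with
      | zero => rfl
      | succ k ih => rw [cat, ih]
    refine ⟨α, β, ?_, rfl, rfl, ?_, ?_⟩
    · intro k
      cases k with
      | zero =>
        have a1 := hp i
        have a2 := hp j
        have a3 := hpT i
        have a4 := hpT j
        show 1 ≤ wordP p [i] ∧ wordP p [i] ≤ 2 * T - 1 ∧ 1 ≤ wordP p [j] ∧
          wordP p [j] ≤ 2 * T - 1
        simp only [wordP_cons, wordP_nil]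
        omega
      | succ k => exact (hf _ (hst k)).1
    · show [i] ≠ [j]
      simpa using hij
    · intro k
      rw [recSeq_eq lam hlam0, hα, hβ]
      exact good_Xi lam hlam0 hlam1 p hp b T hT1 E hEb _ _ (hst k)
  · rintro ⟨α, β, hw, hα, hβ, hne, hXi⟩ hS
    obtain ⟨i, hi⟩ := List.length_eq_one_iff.1 hα
    obtain ⟨j, hj⟩ := List.length_eq_one_iff.1 hβ
    have hij : i ≠ j := by
      rintro rfl; exact hne (hi.trans hj.symm)
    have hdisj : Disjoint (Smap lam p b i '' E) (Smap lam p b j '' E) :=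
      Set.disjoint_iff_inter_eq_empty.2 (hS i j hij)
    obtain ⟨r, hr, hdist⟩ := Metric.exists_pos_forall_lt_edist
      (hEc.image (Smap_cont lam p b i))
      (hEc.image (Smap_cont lam p b j)).isClosed hdisj
    obtain ⟨x, hx⟩ := hEne
    set M : ℝ := (1 + lam ^ (1 - (T : ℤ))) * bmax b / (1 - lam) with hM
    have key : ∀ k : ℕ, (r : ℝ) ≤ lam ^ k * (M + 2 * |x|) := by
      intro k
      obtain ⟨τ, hτ⟩ := cat_cons α i hi k
      obtain ⟨ρ, hρ⟩ := cat_cons β j hj k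
      have m1 : SW lam p b (cat α k) x ∈ Smap lam p b i '' E := by
        rw [hτ]; exact ⟨_, SW_mem lam p b E hE2 τ x hx, rfl⟩
      have m2 : SW lam p b (cat β k) x ∈ Smap lam p b j '' E := by
        rw [hρ]; exact ⟨_, SW_mem lam p b E hE2 ρ x hx, rfl⟩
      have hd := hdist _ m1 _ m2
      rw [edist_dist, ← ENNReal.ofReal_coe_nnreal] at hd
      have hd' : (r : ℝ) ≤ |SW lam p b (cat α k) x - SW lam p b (cat β k) x| := by
        have := (ENNReal.ofReal_lt_ofReal_iff_of_nonneg r.coe_nonneg).1 hd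
        rw [Real.dist_eq] at this
        exact this.le
      refine hd'.trans ?_
      have hc := (hXi k).2.1
      rw [recSeq_eq lam hlam0] at hc
      simp only at hc
      set c := lam ^ (-(wordP p (cat β k) : ℤ)) *
        (wordB lam p b (cat α k) - wordB lam p b (cat β k)) with hcdef
      have hdiff : wordB lam p b (cat α k) - wordB lam p b (cat β k)
          = lam ^ wordP p (cat β k) * c := by
        rw [hcdef, zpow_neg, zpow_natCast, ← mul_assoc,
          mul_inv_cancel₀ (pow_pos hlam0 _).ne', one_mul]
      have e : SW lam p b (cat α k) x - SW lam p b (cat β k) x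
          = lam ^ wordP p (cat β k) * c + (lam ^ wordP p (cat α k) * x
            - lam ^ wordP p (cat β k) * x) := by
        rw [SW_eq, SW_eq, ← hdiff]; ring
      have pa : lam ^ wordP p (cat α k) ≤ lam ^ k :=
        pow_le_pow_of_le_one hlam0.le hlam1.le (cat_wordP p α (fun k => (hw k).1) k)
      have pb : lam ^ wordP p (cat β k) ≤ lam ^ k :=
        pow_le_pow_of_le_one hlam0.le hlam1.le (cat_wordP p β (fun k => (hw k).2.2.1) k)
      have qk := pow_pos hlam0 k
      rw [e]
      refine (abs_add_le _ _).trans ?_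
      have t1 : |lam ^ wordP p (cat β k) * c| ≤ lam ^ k * M := by
        rw [abs_mul, abs_of_pos (pow_pos hlam0 _)]
        exact mul_le_mul pb hc (abs_nonneg _) qk.le
      have t2 : |lam ^ wordP p (cat α k) * x - lam ^ wordP p (cat β k) * x|
          ≤ lam ^ k * |x| + lam ^ k * |x| := by
        refine (abs_sub _ _).trans ?_
        rw [abs_mul, abs_mul, abs_of_pos (pow_pos hlam0 _), abs_of_pos (pow_pos hlam0 _)]
        exact add_le_add (mul_le_mul_of_nonneg_right pa (abs_nonneg _))
          (mul_le_mul_of_nonneg_right pb (abs_nonneg _))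
      linarith
    have hlim : Tendsto (fun k : ℕ => lam ^ k * (M + 2 * |x|)) atTop (nhds 0) := by
      simpa using (tendsto_pow_atTop_nhds_zero_of_lt_one hlam0.le hlam1).mul_const (M + 2 * |x|)
    have := ge_of_tendsto' hlim key
    have hr' : (0 : ℝ) < r := by exact_mod_cast hr
    linarith

end PVOSC
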